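/- On a para-Sasaki-like Riemannian manifold (M,φ,ξ,η,g) with generalized symmetric metric connection ∇̄, the Lie-derivative-type tensors of g along ξ satisfy (L̄_ξ g)(x,y) = (L_ξ g)(x,y) − 2α g(φx,φy) − 2β g(φx,y) for all vector fields x,y, where (L_ξ g)(x,y) = g(∇_x ξ,y) + g(x,∇_y ξ) = 2g(x,φy) and (L̄_ξ g)(x,y) = g(∇̄_x ξ,y) + g(x,∇̄_y ξ). -/

import Mathlib

/-- Abstract algebraic model of an almost paracontact almost paracomplex
Riemannian (apapR) manifold of dimension `2 n + 1`.  Here `R` plays the role of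
the commutative ring of smooth functions `C^∞(M)` and `V` the `R`-module of
vector fields.  `act x f` is the derivative `x(f)` of a function along a vector
field, `bracket` is the Lie bracket, `g` the Riemannian metric, `(phi, xi, eta)`
the almost paracontact almost paracomplex structure, `nab` the Levi-Civita
connection of `g` and `e` a (local) orthonormal frame with `e 0 = xi`. -/
structure ApapR (R V : Type*) [CommRing R] [Algebra ℝ R]
    [AddCommGroup V] [Module R V] where
  n : ℕ
  act : V → R → R
  bracket : V → V → V
  g : V → V → R
  phi : V → V
  xi : V
  eta : V → R
  nab : V → V → V
  e : Fin (2 * n + 1) → V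
  act_addl : ∀ x y f, act (x + y) f = act x f + act y f
  act_smull : ∀ (h : R) (x : V) f, act (h • x) f = h * act x f
  act_addr : ∀ x f h, act x (f + h) = act x f + act x h
  act_mul : ∀ x f h, act x (f * h) = f * act x h + h * act x f
  g_symm : ∀ x y, g x y = g y x
  g_addl : ∀ x y z, g (x + y) z = g x z + g y z
  g_smull : ∀ (f : R) x y, g (f • x) y = f * g x y
  phi_add : ∀ x y, phi (x + y) = phi x + phi y
  phi_smul : ∀ (f : R) x, phi (f • x) = f • phi x
  eta_eq : ∀ x, eta x = g x xi
  -- apapR structure axioms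
  eta_xi : eta xi = 1
  phi_phi : ∀ x, phi (phi x) = x - eta x • xi
  phi_xi : phi xi = 0
  g_phi_phi : ∀ x y, g (phi x) (phi y) = g x y - eta x * eta y
  -- orthonormal frame, `tr φ = 0`
  e_zero : e 0 = xi
  e_orthonormal : ∀ i j, g (e i) (e j) = if i = j then 1 else 0
  trace_phi : (∑ i, g (phi (e i)) (e i)) = 0
  -- Levi-Civita connection axioms
  nab_addl : ∀ x y z, nab (x + y) z = nab x z + nab y z
  nab_smull : ∀ (f : R) x y, nab (f • x) y = f • nab x y
  nab_addr : ∀ x y z, nab x (y + z) = nab x y + nab x z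
  nab_leibniz : ∀ x (f : R) y, nab x (f • y) = f • nab x y + act x f • y
  nab_metric : ∀ x y z, act x (g y z) = g (nab x y) z + g y (nab x z)
  nab_torsion : ∀ x y, nab x y - nab y x = bracket x y

namespace ApapR

variable {R V : Type*} [CommRing R] [Algebra ℝ R] [AddCommGroup V] [Module R V]

/-- The para-Sasaki-like condition `(∇_x φ)y = −g(x,y)ξ − η(y)x + 2η(x)η(y)ξ`. -/
def IsParaSasakiLike (S : ApapR R V) : Prop :=
  ∀ x y, S.nab x (S.phi y) - S.phi (S.nab x y)
    = -(S.g x y • S.xi) - S.eta y • x + (2 * S.eta x * S.eta y) • S.xi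

/-- The generalized symmetric metric connection
`∇̄_x y = ∇_x y + α{g(x,y)ξ − η(y)x} + β{g(φx,y)ξ − η(y)φx}`. -/
def gsmc (S : ApapR R V) (α β : R) (x y : V) : V :=
  S.nab x y + (α * S.g x y) • S.xi - (α * S.eta y) • x
    + (β * S.g (S.phi x) y) • S.xi - (β * S.eta y) • S.phi x

/-- Curvature tensor of a connection `D`:
`R_D(x,y)z = D_x D_y z − D_y D_x z − D_[x,y] z`. -/
def curv (S : ApapR R V) (D : V → V → V) (x y z : V) : V :=
  D x (D y z) - D y (D x z) - D (S.bracket x y) z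

/-- Ricci tensor of a connection `D` with respect to the orthonormal frame. -/
def ric (S : ApapR R V) (D : V → V → V) (x y : V) : R :=
  ∑ i, S.g (S.curv D (S.e i) x y) (S.e i)

/-- Scalar curvature of a connection `D`. -/
def scal (S : ApapR R V) (D : V → V → V) : R :=
  ∑ i, S.ric D (S.e i) (S.e i)

/-- Divergence of a vector field with respect to a connection `D`. -/
def divg (S : ApapR R V) (D : V → V → V) (x : V) : R :=
  ∑ i, S.g (D (S.e i) x) (S.e i)

/-- The associated metric `g̃(x,y) = g(x,φy) + η(x)η(y)`. -/
def tg (S : ApapR R V) (x y : V) : R := S.g x (S.phi y) + S.eta x * S.eta y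

/-- A function is constant iff all its derivatives vanish. -/
def IsConstant (S : ApapR R V) (f : R) : Prop := ∀ x, S.act x f = 0

end ApapR

namespace ApapR

variable {R V : Type*} [CommRing R] [Algebra ℝ R] [AddCommGroup V] [Module R V]

/-!
The covariant derivative of `ξ` determines both tensors. For the generalized symmetric metric
connection, `η ∘ φ = 0` and `φ²x = x - η(x)ξ` turn the defining formula into
`∇̄_x ξ = ∇_x ξ - α φ²x - β φx` on every apapR manifold, and `φ` is self-adjoint for `g`.
On a para-Sasaki-like manifold the condition on `∇φ`, evaluated at `ξ`, reads `φ(∇_x ξ) = φ²x`;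
applying `φ` once more gives `∇_x ξ = φx`, because `η(∇_x ξ) = 0` for the unit field `ξ`.
-/

section

variable (S : ApapR R V)

theorem g_sub_left (x y z : V) : S.g (x - y) z = S.g x z - S.g y z :=
  (AddMonoidHom.mk' (S.g · z) (S.g_addl · · z)).map_sub x y

theorem phi_sub (x y : V) : S.phi (x - y) = S.phi x - S.phi y :=
  (AddMonoidHom.mk' S.phi S.phi_add).map_sub x y

theorem nab_zero_right (x : V) : S.nab x 0 = 0 :=
  (AddMonoidHom.mk' (S.nab x) (S.nab_addr x)).map_zero

theorem act_one (x : V) : S.act x 1 = 0 := by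
  simpa only [one_mul, left_eq_add] using S.act_mul x 1 1

theorem g_xi_left (x : V) : S.g S.xi x = S.eta x := by
  rw [S.g_symm, S.eta_eq]

theorem eta_smul_xi (f : R) : S.eta (f • S.xi) = f := by
  rw [S.eta_eq, S.g_smull, ← S.eta_eq, S.eta_xi, mul_one]

theorem phi_phi_phi (x : V) : S.phi (S.phi (S.phi x)) = S.phi x := by
  rw [S.phi_phi x, S.phi_sub, S.phi_smul, S.phi_xi, smul_zero, sub_zero]

theorem eta_phi (x : V) : S.eta (S.phi x) = 0 := by
  have eta_phi_smul_xi : S.eta (S.phi x) • S.xi = 0 := by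
    rw [← sub_eq_self (a := S.phi x), ← S.phi_phi, S.phi_phi_phi]
  calc
    S.eta (S.phi x) = S.eta (S.eta (S.phi x) • S.xi) := (S.eta_smul_xi _).symm
    _ = S.eta ((0 : R) • S.xi) := by rw [eta_phi_smul_xi, zero_smul]
    _ = 0 := S.eta_smul_xi 0

theorem g_phi_left (x y : V) : S.g (S.phi x) y = S.g x (S.phi y) :=
  calc
    S.g (S.phi x) y = S.g (S.phi (S.phi x)) (S.phi y) := by
      rw [S.g_phi_phi, S.eta_phi, zero_mul, sub_zero]
    _ = S.g x (S.phi y) := by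
      rw [S.phi_phi, S.g_sub_left, S.g_smull, S.g_xi_left, S.eta_phi, mul_zero, sub_zero]

theorem eta_nab_xi (x : V) : S.eta (S.nab x S.xi) = 0 := by
  have eta_add_self : S.eta (S.nab x S.xi) + S.eta (S.nab x S.xi) = 0 := by
    have metric_xi_xi := S.nab_metric x S.xi S.xi
    rwa [S.g_xi_left, S.eta_xi, S.act_one, S.g_xi_left, ← S.eta_eq, eq_comm] at metric_xi_xi
  rw [← two_smul ℝ] at eta_add_self
  exact (smul_eq_zero_iff_right two_ne_zero).mp eta_add_self

variable {S} in
theorem IsParaSasakiLike.nab_xi (hS : S.IsParaSasakiLike) (x : V) :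
    S.nab x S.xi = S.phi x := by
  have phi_nab_xi : S.phi (S.nab x S.xi) = S.phi (S.phi x) := by
    have nab_phi_xi := hS x S.xi
    rw [S.phi_xi, S.nab_zero_right, S.eta_xi, ← S.eta_eq, zero_sub] at nab_phi_xi
    rw [← neg_inj, nab_phi_xi, S.phi_phi]
    module
  calc
    S.nab x S.xi = S.phi (S.phi (S.nab x S.xi)) := by
      rw [S.phi_phi, S.eta_nab_xi, zero_smul, sub_zero]
    _ = S.phi x := by rw [phi_nab_xi, S.phi_phi_phi]

theorem gsmc_xi (α β : R) (x : V) :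
    S.gsmc α β x S.xi = S.nab x S.xi - α • S.phi (S.phi x) - β • S.phi x := by
  rw [gsmc, ← S.eta_eq, ← S.eta_eq, S.eta_phi, S.eta_xi, S.phi_phi]
  module

/-- The Lie-derivative-type tensor `(L_ξ g)(x, y) = g(D_x ξ, y) + g(x, D_y ξ)` of the metric along
`ξ`, taken with respect to a connection `D`, which is passed as a bare operation on vector
fields. It is `L_ξ g` for `D = ∇` and `L̄_ξ g` for `D = ∇̄`. -/
def lieXi (D : V → V → V) (x y : V) : R :=
  S.g (D x S.xi) y + S.g x (D y S.xi)

variable {S} in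
theorem IsParaSasakiLike.lieXi_nab (hS : S.IsParaSasakiLike) (x y : V) :
    S.lieXi S.nab x y = 2 * S.g x (S.phi y) := by
  rw [lieXi, hS.nab_xi, hS.nab_xi, S.g_phi_left, two_mul]

theorem lieXi_gsmc (α β : R) (x y : V) :
    S.lieXi (S.gsmc α β) x y
      = S.lieXi S.nab x y - 2 * α * S.g (S.phi x) (S.phi y) - 2 * β * S.g (S.phi x) y := by
  have g_gsmc_xi (u v : V) : S.g (S.gsmc α β u S.xi) v
      = S.g (S.nab u S.xi) v - α * S.g (S.phi u) (S.phi v) - β * S.g (S.phi u) v := by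
    rw [S.gsmc_xi, S.g_sub_left, S.g_sub_left, S.g_smull, S.g_smull, S.g_phi_left (S.phi u)]
  rw [lieXi, lieXi, S.g_symm x, S.g_symm x, g_gsmc_xi, g_gsmc_xi, S.g_symm (S.phi y) (S.phi x),
    S.g_phi_left y x, S.g_symm y (S.phi x)]
  ring

end

/-- on a para-Sasaki-like manifold with the generalized symmetric
metric connection, `(L_ξ g)(x,y) = 2g(x,φy)` and
`(L̄_ξ g)(x,y) = (L_ξ g)(x,y) − 2α g(φx,φy) − 2β g(φx,y)`, where the
Lie-derivative-type tensors are `(L_D g)(x,y) = g(D_x ξ, y) + g(x, D_y ξ)`. -/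
theorem lie_xi_gsmc_eq (S : ApapR R V) (hS : S.IsParaSasakiLike) (α β : R)
    (x y : V) :
    (S.g (S.nab x S.xi) y + S.g x (S.nab y S.xi) = 2 * S.g x (S.phi y)) ∧
    (S.g (S.gsmc α β x S.xi) y + S.g x (S.gsmc α β y S.xi)
      = S.g (S.nab x S.xi) y + S.g x (S.nab y S.xi)
        - 2 * α * S.g (S.phi x) (S.phi y) - 2 * β * S.g (S.phi x) y) :=
  ⟨hS.lieXi_nab x y, S.lieXi_gsmc α β x y⟩

end ApapR
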